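/- arXiv:2512.09457 — 2 statements merged into one kernel-verified Lean document; each statement's English description precedes it below -/
import Mathlib

section
/- For an [n,k]_q linear code C with generator matrix G of rank k, the s-th generalized Hamming weight satisfies d_s(C) = n - max{ m_G(V) : V a (k-s)-dimensional subspace of F_q^k }, where m_G(V) is the number of columns of G lying in V. -/
open Module

variable {F : Type*} [Field F] [Fintype F]

/-- The support of a subspace `U ⊆ F^ι`: coordinates where some vector of `U` is nonzero. -/
def csupp {ι : Type*} (U : Submodule F (ι → F)) : Set ι :=
  {j | ∃ x ∈ U, x j ≠ 0}

/-- The support weight of a subspace of `F^ι`. -/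
noncomputable def wt {ι : Type*} (U : Submodule F (ι → F)) : ℕ := (csupp U).ncard

/-- `U` is an `s`-minimal subcode of `C`. -/
def IsMinimalSubcode {ι : Type*} (C U : Submodule F (ι → F)) (s : ℕ) : Prop :=
  U ≤ C ∧ Module.finrank F U = s ∧
    ∀ V : Submodule F (ι → F), V ≤ C → Module.finrank F V = s →
      csupp V ⊆ csupp U → V = U

/-- `C` is an `s`-minimal code. -/
def SMinimal {ι : Type*} (C : Submodule F (ι → F)) (s : ℕ) : Prop :=
  ∀ U : Submodule F (ι → F), U ≤ C → Module.finrank F U = s → IsMinimalSubcode C U s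

/-- The `s`-th generalized Hamming weight of `C`. -/
noncomputable def dGHW {ι : Type*} (C : Submodule F (ι → F)) (s : ℕ) : ℕ :=
  sInf {w | ∃ U : Submodule F (ι → F), U ≤ C ∧ Module.finrank F U = s ∧ wt U = w}

/-- The `s`-th maximum support weight of `C`. -/
noncomputable def DGHW {ι : Type*} (C : Submodule F (ι → F)) (s : ℕ) : ℕ :=
  sSup {w | ∃ U : Submodule F (ι → F), U ≤ C ∧ Module.finrank F U = s ∧ wt U = w}

/-- The orthogonal complement of `V ⊆ F^k` with respect to the standard bilinear form. -/
def perp {k : ℕ} (V : Submodule F (Fin k → F)) : Submodule F (Fin k → F) :=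
  ⨅ v ∈ V, LinearMap.ker (∑ j, v j • (LinearMap.proj j : (Fin k → F) →ₗ[F] F))

/-- `mG G W` counts the columns of `G` lying in the subspace `W`. -/
noncomputable def mG {k n : ℕ} (G : Matrix (Fin k) (Fin n) F)
    (W : Submodule F (Fin k → F)) : ℕ :=
  {i : Fin n | (fun r => G r i) ∈ W}.ncard

/-- Membership in the orthogonal complement, in terms of the dot product. -/
lemma mem_perp {K : Type*} [Field K] {k : ℕ} {V : Submodule K (Fin k → K)} {x : Fin k → K} :
    x ∈ perp V ↔ ∀ v ∈ V, v ⬝ᵥ x = 0 := by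
  simp [perp, dotProduct]

lemma perp_eq_dualCoannihilator {K : Type*} [Field K] {k : ℕ} (V : Submodule K (Fin k → K)) :
    perp V = (V.map (dotProductEquiv K (Fin k)).toLinearMap).dualCoannihilator := by
  ext x
  rw [mem_perp, Submodule.mem_dualCoannihilator]
  refine ⟨?_, fun h v hv => h _ (Submodule.mem_map_of_mem hv)⟩
  rintro h _ ⟨v, hv, rfl⟩
  exact h v hv

lemma finrank_add_finrank_perp {K : Type*} [Field K] {k : ℕ} (V : Submodule K (Fin k → K)) :
    finrank K V + finrank K (perp V) = k := by
  have h := Subspace.finrank_add_finrank_dualCoannihilator_eq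
    (V.map (dotProductEquiv K (Fin k)).toLinearMap)
  rwa [← perp_eq_dualCoannihilator, LinearEquiv.finrank_map_eq, finrank_fin_fun] at h

lemma perp_perp {K : Type*} [Field K] {k : ℕ} (V : Submodule K (Fin k → K)) : perp (perp V) = V := by
  have h₁ := finrank_add_finrank_perp V
  have h₂ := finrank_add_finrank_perp (perp V)
  refine (Submodule.eq_of_le_of_finrank_eq (fun x hx => mem_perp.2 fun v hv => ?_)
    (by omega)).symm
  rw [dotProduct_comm]
  exact mem_perp.1 hv x hx

/-- The coordinates outside the support of the subcode encoded from `W` are exactly the columns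
of `G` orthogonal to `W`. -/
lemma wt_map_vecMulLinear_add_mG_perp {K : Type*} [Field K] {k n : ℕ} (G : Matrix (Fin k) (Fin n) K)
    (W : Submodule K (Fin k → K)) :
    wt (W.map G.vecMulLinear) + mG G (perp W) = n := by
  have h : {i : Fin n | (fun r => G r i) ∈ perp W} = (csupp (W.map G.vecMulLinear))ᶜ := by
    ext i
    simp [mem_perp, csupp, Matrix.vecMul]
  rw [wt, mG, h, Set.ncard_add_ncard_compl, Nat.card_fin]

lemma vecMulLinear_injective_of_rank_eq {K : Type*} [Field K] {k n : ℕ} {G : Matrix (Fin k) (Fin n) K}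
    (hG : G.rank = k) : Function.Injective G.vecMulLinear := by
  have h : LinearIndependent K G.row := by
    rw [linearIndependent_iff_card_eq_finrank_span, Set.finrank, ← G.rank_eq_finrank_span_row, hG,
      Fintype.card_fin]
  exact Matrix.vecMul_injective_iff.2 h

/-- for a generator matrix `G` of rank `k`, the `s`-th generalized Hamming
weight of the row space equals `n` minus the maximal number of columns of `G` lying in a
`(k-s)`-dimensional subspace of `F^k`. -/
theorem dGHW_eq_n_sub_max_mG (n k s : ℕ) (hs1 : 1 ≤ s) (hs2 : s ≤ k)
    (G : Matrix (Fin k) (Fin n) F) (hG : G.rank = k) :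
    dGHW (LinearMap.range (Matrix.vecMulLinear G)) s =
      n - sSup {m | ∃ V : Submodule F (Fin k → F),
        Module.finrank F V = k - s ∧ mG G V = m} := by
  have hinj := vecMulLinear_injective_of_rank_eq hG
  set B := {m | ∃ V : Submodule F (Fin k → F), finrank F V = k - s ∧ mG G V = m}
  have hbdd : BddAbove B := by
    refine ⟨n, ?_⟩
    rintro _ ⟨V, -, rfl⟩
    simpa [mG] using Set.ncard_le_card {i : Fin n | (fun r => G r i) ∈ V}
  have hne : B.Nonempty := by
    obtain ⟨f, hf⟩ := exists_linearIndependent_of_le_finrank (R := F) (M := Fin k → F) (n := k - s)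
      (by simp)
    exact ⟨_, _, by simpa using finrank_span_eq_card hf, rfl⟩
  have hmap (W : Submodule F (Fin k → F)) : finrank F (W.map G.vecMulLinear) = finrank F W :=
    (W.equivMapOfInjective _ hinj).finrank_eq.symm
  refine IsLeast.csInf_eq ⟨?_, ?_⟩
  · obtain ⟨V, hV, hVB⟩ := Nat.sSup_mem hne hbdd
    have hrank := finrank_add_finrank_perp V
    have hwt := wt_map_vecMulLinear_add_mG_perp G (perp V)
    rw [perp_perp] at hwt
    refine ⟨(perp V).map G.vecMulLinear, LinearMap.map_le_range, ?_, by omega⟩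
    rw [hmap]
    omega
  · rintro _ ⟨U, hU, hUs, rfl⟩
    obtain ⟨W, rfl⟩ : ∃ W : Submodule F (Fin k → F), W.map G.vecMulLinear = U :=
      ⟨_, Submodule.map_comap_eq_of_le hU⟩
    rw [hmap] at hUs
    have hrank := finrank_add_finrank_perp W
    have hwt := wt_map_vecMulLinear_add_mG_perp G W
    have hle : mG G (perp W) ≤ sSup B := le_csSup hbdd ⟨perp W, by omega, rfl⟩
    omega
end

section
/- There exists a cutting s-blocking set of PG(k-1,q) of size n if and only if there exists a projective s-minimal [n,k]_q linear code. -/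
open Module

variable {F : Type*} [Field F] [Fintype F]

/-- The points of `PG(k-1,q)`: the one-dimensional subspaces of `F^k`. -/
def PGpoints (F : Type*) [Field F] (k : ℕ) : Set (Submodule F (Fin k → F)) :=
  {P | Module.finrank F P = 1}

/-- `B` is a `t`-fold `s`-blocking set of `PG(k-1,q)`: every projective subspace of
codimension `s` (i.e. `(k-s)`-dimensional linear subspace) contains at least `t` points of `B`. -/
def IsTFoldSBlocking (F : Type*) [Field F] (k : ℕ)
    (B : Set (Submodule F (Fin k → F))) (t s : ℕ) : Prop :=
  B ⊆ PGpoints F k ∧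
    ∀ W : Submodule F (Fin k → F), Module.finrank F W = k - s →
      t ≤ (B ∩ {P | P ≤ W}).ncard

/-- `B` is a cutting `s`-blocking set of `PG(k-1,q)`: for every projective subspace `W` of
codimension `s`, the points of `B` lying in `W` span `W`. -/
def IsCuttingSBlocking (F : Type*) [Field F] (k : ℕ)
    (B : Set (Submodule F (Fin k → F))) (s : ℕ) : Prop :=
  B ⊆ PGpoints F k ∧
    ∀ W : Submodule F (Fin k → F), Module.finrank F W = k - s →
      sSup (B ∩ {P | P ≤ W}) = W

/-- The dual code of `C ⊆ F^ι` with respect to the standard bilinear form. -/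
def dualCode {ι : Type*} [Fintype ι] (C : Submodule F (ι → F)) : Submodule F (ι → F) :=
  ⨅ c ∈ C, LinearMap.ker (∑ j, c j • (LinearMap.proj j : (ι → F) →ₗ[F] F))

/-- A linear code is projective if its dual code has minimum Hamming distance at least 3. -/
def IsProjectiveCode {ι : Type*} [Fintype ι] (C : Submodule F (ι → F)) : Prop :=
  ∀ x ∈ dualCode C, x ≠ 0 → 3 ≤ ({j | x j ≠ 0} : Set ι).ncard

namespace Submodule

variable {K E : Type*} [Field K] [AddCommGroup E] [Module K E]

theorem sSup_range_span_singleton_inter_le {ι : Type*} (g : ι → E) (W : Submodule K E) :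
    sSup (Set.range (fun j => span K {g j}) ∩ {P | P ≤ W}) = span K (g '' {j | g j ∈ W}) := by
  apply le_antisymm
  · apply sSup_le
    rintro _ ⟨⟨j, rfl⟩, hj⟩
    exact span_mono (Set.singleton_subset_iff.2
      (Set.mem_image_of_mem g ((span_singleton_le_iff_mem _ _).1 hj)))
  · rw [span_le]
    rintro _ ⟨j, hj, rfl⟩
    have hmem : span K {g j} ∈ Set.range (fun j => span K {g j}) ∩ {P | P ≤ W} :=
      ⟨⟨j, rfl⟩, (span_singleton_le_iff_mem _ _).2 hj⟩
    exact le_sSup hmem (mem_span_singleton_self (g j))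

variable [FiniteDimensional K E]

theorem exists_ge_finrank_eq (S : Submodule K E) {d : ℕ} (h : finrank K S ≤ d)
    (hd : d ≤ finrank K E) : ∃ W : Submodule K E, S ≤ W ∧ finrank K W = d := by
  induction d, h using Nat.le_induction with
  | base => exact ⟨S, le_rfl, rfl⟩
  | succ d _ ih =>
    obtain ⟨W, hSW, hW⟩ := ih (by omega)
    have hne : W ≠ ⊤ := by
      rintro rfl
      rw [finrank_top] at hW
      omega
    obtain ⟨v, hv⟩ : ∃ v, v ∉ W := by
      by_contra! hall
      exact hne (eq_top_iff'.2 hall)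
    exact ⟨W ⊔ span K {v}, hSW.trans le_sup_left, by rw [finrank_sup_span_singleton hv, hW]⟩

theorem exists_mem_ge_finrank_eq (S : Submodule K E) (v : E) {d : ℕ} (h : finrank K S < d)
    (hd : d ≤ finrank K E) : ∃ W : Submodule K E, S ≤ W ∧ v ∈ W ∧ finrank K W = d := by
  have hle : finrank K ↥(S ⊔ span K {v}) ≤ d := by
    by_cases hv : v ∈ S
    · rw [sup_eq_left.2 ((span_singleton_le_iff_mem v S).2 hv)]
      exact h.le
    · rw [finrank_sup_span_singleton hv]
      exact h
  obtain ⟨W, hSW, hW⟩ := exists_ge_finrank_eq _ hle hd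
  exact ⟨W, le_sup_left.trans hSW,
    hSW (mem_sup_right (mem_span_singleton_self v)), hW⟩

/-- Subspaces of a fixed proper dimension `d` are spanned by their members from a family `g` if and
only if they are determined, among each other, by inclusion of the traces of `g`. -/
theorem forall_span_image_eq_iff {ι : Type*} (g : ι → E) {d : ℕ} (hd : d < finrank K E) :
    (∀ W : Submodule K E, finrank K W = d → span K (g '' {j | g j ∈ W}) = W) ↔
      ∀ W W' : Submodule K E, finrank K W = d → finrank K W' = d →
        {j | g j ∈ W} ⊆ {j | g j ∈ W'} → W' = W := by
  constructor
  · intro h W W' hW hW' hsub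
    have hle : W ≤ W' := by
      rw [← h W hW, ← h W' hW']
      exact span_mono (Set.image_mono hsub)
    exact (eq_of_le_of_finrank_eq hle (hW.trans hW'.symm)).symm
  · intro h W hW
    have hle : span K (g '' {j | g j ∈ W}) ≤ W := by
      rw [span_le]
      rintro _ ⟨j, hj, rfl⟩
      exact hj
    by_contra hne
    have hlt := finrank_lt_finrank_of_lt (lt_of_le_of_ne hle hne)
    obtain ⟨v, hv⟩ : ∃ v, v ∉ W := by
      by_contra! hall
      rw [eq_top_iff'.2 hall, finrank_top] at hW
      omega
    obtain ⟨W', hSW', hvW', hW'⟩ := exists_mem_ge_finrank_eq _ v (hlt.trans_eq hW) hd.le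
    exact hv (h W W' hW hW'
      (fun j hj => hSW' (subset_span (Set.mem_image_of_mem g hj))) ▸ hvW')

theorem eq_top_of_forall_finrank_eq_le (S : Submodule K E) {d : ℕ} (hpos : 0 < d)
    (hd : d ≤ finrank K E) (h : ∀ W : Submodule K E, finrank K W = d → W ≤ S) : S = ⊤ := by
  rw [eq_top_iff']
  intro v
  obtain ⟨W, -, hvW, hW⟩ :=
    exists_mem_ge_finrank_eq (⊥ : Submodule K E) v (by rwa [finrank_bot]) hd
  exact h W hW hvW

end Submodule

section ColumnCode

variable {K E ι : Type*} [Field K] [AddCommGroup E] [Module K E]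

/-- The encoder with columns `g`: a functional `f` is sent to the word `(f (g j))_j`. -/
def columnEncoder (g : ι → E) : Dual K E →ₗ[K] (ι → K) :=
  LinearMap.pi fun j => Dual.eval K E (g j)

@[simp]
theorem columnEncoder_apply (g : ι → E) (f : Dual K E) (j : ι) :
    columnEncoder g f j = f (g j) :=
  rfl

theorem columnEncoder_injective {g : ι → E} (hg : Submodule.span K (Set.range g) = ⊤) :
    Function.Injective (columnEncoder (K := K) g) := by
  intro f f' h
  refine LinearMap.ext_on_range hg fun j => ?_
  exact congrFun h j

theorem csupp_map_columnEncoder (g : ι → E) (Φ : Submodule K (Dual K E)) :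
    csupp (Φ.map (columnEncoder g)) = {j | g j ∈ Φ.dualCoannihilator}ᶜ := by
  ext j
  simp [csupp, Submodule.mem_dualCoannihilator]

theorem sMinimal_range_columnEncoder_iff [FiniteDimensional K E] {g : ι → E}
    (hg : Function.Injective (columnEncoder (K := K) g)) {s : ℕ} (hs : s ≤ finrank K E) :
    SMinimal (LinearMap.range (columnEncoder (K := K) g)) s ↔
      ∀ W W' : Submodule K E, finrank K W = finrank K E - s → finrank K W' = finrank K E - s →
        {j | g j ∈ W} ⊆ {j | g j ∈ W'} → W' = W := by
  have hfin (Φ : Submodule K (Dual K E)) :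
      finrank K (Φ.map (columnEncoder g)) = finrank K Φ :=
    (Submodule.equivMapOfInjective _ hg Φ).finrank_eq.symm
  constructor
  · intro h W W' hW hW' hsub
    have hann (X : Submodule K E) (hX : finrank K X = finrank K E - s) :
        finrank K (X.dualAnnihilator.map (columnEncoder g)) = s := by
      have := Subspace.finrank_add_finrank_dualAnnihilator_eq X
      rw [hfin]
      omega
    have key := (h _ LinearMap.map_le_range (hann W hW)).2.2 _ LinearMap.map_le_range
      (hann W' hW') (by
        rw [csupp_map_columnEncoder, csupp_map_columnEncoder,
          Subspace.dualAnnihilator_dualCoannihilator_eq,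
          Subspace.dualAnnihilator_dualCoannihilator_eq]
        exact Set.compl_subset_compl.2 hsub)
    have := congrArg Submodule.dualCoannihilator (Submodule.map_injective_of_injective hg key)
    rwa [Subspace.dualAnnihilator_dualCoannihilator_eq,
      Subspace.dualAnnihilator_dualCoannihilator_eq] at this
  · intro h U hU hUs
    refine ⟨hU, hUs, fun V hV hVs hsub => ?_⟩
    rw [← Submodule.map_comap_eq_of_le hU] at hUs hsub ⊢
    rw [← Submodule.map_comap_eq_of_le hV] at hVs hsub ⊢
    generalize U.comap (columnEncoder g) = Φ at *
    generalize V.comap (columnEncoder g) = Ψ at *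
    rw [hfin] at hUs hVs
    rw [csupp_map_columnEncoder, csupp_map_columnEncoder, Set.compl_subset_compl] at hsub
    have h1 := Subspace.finrank_add_finrank_dualCoannihilator_eq Φ
    have h2 := Subspace.finrank_add_finrank_dualCoannihilator_eq Ψ
    have := congrArg Submodule.dualAnnihilator
      (h Φ.dualCoannihilator Ψ.dualCoannihilator (by omega) (by omega) hsub)
    rw [Subspace.dualCoannihilator_dualAnnihilator_eq,
      Subspace.dualCoannihilator_dualAnnihilator_eq] at this
    rw [this]

theorem mem_dualCode_range_columnEncoder [Fintype ι] (g : ι → E) (x : ι → K) :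
    x ∈ dualCode (LinearMap.range (columnEncoder (K := K) g)) ↔ ∑ j, x j • g j = 0 := by
  rw [← Module.forall_dual_apply_eq_zero_iff K]
  simp [dualCode, Submodule.mem_iInf, mul_comm]

theorem isProjectiveCode_range_columnEncoder_iff [Fintype ι] (g : ι → E) :
    IsProjectiveCode (LinearMap.range (columnEncoder (K := K) g)) ↔
      (∀ j, g j ≠ 0) ∧ Function.Injective fun j => Submodule.span K {g j} := by
  classical
  constructor
  · intro h
    constructor
    · intro j hj
      have h3 := h (Pi.single j 1)
        (by simp [mem_dualCode_range_columnEncoder, Pi.single_apply, ite_smul, hj]) (by simp)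
      have hle : ({i | (Pi.single j 1 : ι → K) i ≠ 0} : Set ι).ncard ≤ ({j} : Set ι).ncard := by
        refine Set.ncard_le_ncard ?_
        intro i hi
        by_contra hij
        exact hi (Pi.single_eq_of_ne hij _)
      rw [Set.ncard_singleton] at hle
      omega
    · intro i j hij
      by_contra hne
      obtain ⟨c, hc⟩ := Submodule.mem_span_singleton.1
        ((show Submodule.span K {g i} = Submodule.span K {g j} from hij) ▸
          Submodule.mem_span_singleton_self (g i))
      have h3 := h (Pi.single i 1 - Pi.single j c)
        (by simp [mem_dualCode_range_columnEncoder, Pi.single_apply, ite_smul, sub_smul, hc])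
        (fun h0 => by simpa [hne] using congrFun h0 i)
      have hle : ({l | (Pi.single i 1 - Pi.single j c : ι → K) l ≠ 0} : Set ι).ncard ≤
          ({i, j} : Set ι).ncard := by
        refine Set.ncard_le_ncard ?_
        intro l hl
        by_contra hlij
        simp only [Set.mem_insert_iff, Set.mem_singleton_iff, not_or] at hlij
        exact hl (by simp [hlij.1, hlij.2])
      rw [Set.ncard_pair hne] at hle
      omega
  · rintro ⟨h0, hinj⟩ x hx hx0
    rw [mem_dualCode_range_columnEncoder] at hx
    by_contra! hlt
    have hsum : ∑ j ∈ {j | x j ≠ 0}.toFinset, x j • g j = 0 := by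
      rw [← hx]
      refine Finset.sum_subset (Finset.subset_univ _) fun j _ hj => ?_
      simp only [ne_eq, Set.mem_toFinset, Set.mem_ofPred_eq, not_not] at hj
      rw [hj, zero_smul]
    have hmem (j : ι) : j ∈ {j | x j ≠ 0}.toFinset ↔ x j ≠ 0 := by simp
    rw [Set.ncard_eq_toFinset_card'] at hlt
    generalize {j | x j ≠ 0}.toFinset = T at *
    obtain hT | hT | hT : T.card = 0 ∨ T.card = 1 ∨ T.card = 2 := by omega
    · rw [Finset.card_eq_zero] at hT
      subst hT
      exact hx0 (funext fun j => by simpa using hmem j)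
    · obtain ⟨i, rfl⟩ := Finset.card_eq_one.1 hT
      rw [Finset.sum_singleton] at hsum
      exact (smul_ne_zero ((hmem i).1 (by simp)) (h0 i)) hsum
    · obtain ⟨i, j, hij, rfl⟩ := Finset.card_eq_two.1 hT
      rw [Finset.sum_pair hij] at hsum
      have hi : x i ≠ 0 := (hmem i).1 (by simp)
      have hj : x j ≠ 0 := (hmem j).1 (by simp)
      refine hij (hinj ?_)
      show Submodule.span K {g i} = Submodule.span K {g j}
      rw [← Submodule.span_singleton_smul_eq hi.isUnit (g i), eq_neg_of_add_eq_zero_left hsum,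
        ← neg_smul, Submodule.span_singleton_smul_eq (neg_ne_zero.2 hj).isUnit]

theorem exists_range_columnEncoder_eq
    [FiniteDimensional K E] [Finite ι] (C : Submodule K (ι → K)) (hC : finrank K C = finrank K E) :
    ∃ g : ι → E, Function.Injective (columnEncoder (K := K) g) ∧
      LinearMap.range (columnEncoder (K := K) g) = C := by
  let e : Dual K E ≃ₗ[K] C :=
    LinearEquiv.ofFinrankEq _ _ (by rw [Subspace.dual_finrank_eq, hC])
  let g : ι → E := fun j =>
    (evalEquiv K E).symm (LinearMap.proj j ∘ₗ C.subtype ∘ₗ e.toLinearMap)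
  have hg : columnEncoder (K := K) g = C.subtype ∘ₗ e.toLinearMap := by
    ext f j
    simp [g]
  refine ⟨g, ?_, ?_⟩
  · rw [hg]
    exact C.subtype_injective.comp e.injective
  · rw [hg, LinearMap.range_comp, LinearEquiv.range, Submodule.map_top, C.range_subtype]

end ColumnCode

theorem isCuttingSBlocking_range_span_iff {K ι : Type*} [Field K] {k s : ℕ}
    (hs1 : 1 ≤ s) (hs2 : s ≤ k - 1) {g : ι → Fin k → K} (hg0 : ∀ j, g j ≠ 0)
    (hg : Function.Injective (columnEncoder (K := K) g)) :
    IsCuttingSBlocking K k (Set.range fun j => Submodule.span K {g j}) s ↔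
      SMinimal (LinearMap.range (columnEncoder (K := K) g)) s := by
  have hk : finrank K (Fin k → K) = k := finrank_fin_fun K
  have hpts : (Set.range fun j => Submodule.span K {g j}) ⊆ PGpoints K k := by
    rintro _ ⟨j, rfl⟩
    exact finrank_span_singleton (hg0 j)
  rw [sMinimal_range_columnEncoder_iff hg (by omega),
    ← Submodule.forall_span_image_eq_iff g (by omega), hk, IsCuttingSBlocking,
    and_iff_right hpts]
  simp_rw [Submodule.sSup_range_span_singleton_inter_le]

theorem IsCuttingSBlocking.sSup_eq_top {K : Type*} [Field K] {k s : ℕ}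
    {B : Set (Submodule K (Fin k → K))}
    (hB : IsCuttingSBlocking K k B s) (hs1 : 1 ≤ s) (hs2 : s ≤ k - 1) : sSup B = ⊤ := by
  refine Submodule.eq_top_of_forall_finrank_eq_le _ (d := k - s) (by omega)
    (by rw [finrank_fin_fun]; omega) fun W hW => ?_
  rw [← hB.2 W hW]
  exact sSup_le_sSup Set.inter_subset_left

theorem exists_injective_range_span_eq {k n : ℕ} {B : Set (Submodule F (Fin k → F))}
    (hB : B ⊆ PGpoints F k) (hn : B.ncard = n) :
    ∃ g : Fin n → Fin k → F, (∀ j, g j ≠ 0) ∧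
      (Function.Injective fun j => Submodule.span F {g j}) ∧
      (Set.range fun j => Submodule.span F {g j}) = B := by
  have : Finite (Submodule F (Fin k → F)) := Finite.of_injective _ SetLike.coe_injective
  let e : Fin n ≃ B := (Finite.equivFinOfCardEq hn).symm
  have hpt (j : Fin n) : ∃ v : Fin k → F, v ≠ 0 ∧ Submodule.span F {v} = e j := by
    obtain ⟨v, hv, h0⟩ := finrank_eq_one_iff'.1 (hB (e j).2)
    refine ⟨v, fun h => hv (Subtype.ext h), le_antisymm ?_ fun w hw => ?_⟩
    · exact (Submodule.span_singleton_le_iff_mem _ _).2 v.2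
    · obtain ⟨c, hc⟩ := h0 ⟨w, hw⟩
      exact Submodule.mem_span_singleton.2 ⟨c, congrArg Subtype.val hc⟩
  choose g hg0 hg using hpt
  refine ⟨g, hg0, ?_, ?_⟩
  · simp_rw [hg]
    exact Subtype.val_injective.comp e.injective
  · simp_rw [hg]
    ext P
    exact ⟨fun ⟨j, hj⟩ => hj ▸ (e j).2, fun hP => ⟨e.symm ⟨P, hP⟩, by simp⟩⟩

/-- there exists a cutting `s`-blocking set of `PG(k-1,q)` of size `n` iff
there exists a projective `s`-minimal `[n,k]_q` linear code. -/
theorem cutting_iff_projective_sMinimal (n k s q : ℕ) (hq : Fintype.card F = q)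
    (hs1 : 1 ≤ s) (hs2 : s ≤ k - 1) :
    (∃ B : Set (Submodule F (Fin k → F)), IsCuttingSBlocking F k B s ∧ B.ncard = n) ↔
    (∃ C : Submodule F (Fin n → F), Module.finrank F C = k ∧
      IsProjectiveCode C ∧ SMinimal C s) := by
  constructor
  · rintro ⟨B, hB, hn⟩
    obtain ⟨g, hg0, hinj, rfl⟩ := exists_injective_range_span_eq hB.1 hn
    have htop : Submodule.span F (Set.range g) = ⊤ := by
      rw [Submodule.span_range_eq_iSup, ← sSup_range]
      exact hB.sSup_eq_top hs1 hs2
    have hg := columnEncoder_injective htop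
    refine ⟨LinearMap.range (columnEncoder (K := F) g), ?_,
      (isProjectiveCode_range_columnEncoder_iff g).2 ⟨hg0, hinj⟩,
      (isCuttingSBlocking_range_span_iff hs1 hs2 hg0 hg).1 hB⟩
    rw [LinearMap.finrank_range_of_inj hg, Subspace.dual_finrank_eq, finrank_fin_fun]
  · rintro ⟨C, hC, hproj, hmin⟩
    obtain ⟨g, hg, rfl⟩ := exists_range_columnEncoder_eq (E := Fin k → F) C
      (by rw [hC, finrank_fin_fun])
    obtain ⟨hg0, hinj⟩ := (isProjectiveCode_range_columnEncoder_iff g).1 hproj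
    refine ⟨_, (isCuttingSBlocking_range_span_iff hs1 hs2 hg0 hg).2 hmin, ?_⟩
    rw [← Set.image_univ, Set.ncard_image_of_injective _ hinj, Set.ncard_univ, Nat.card_fin]
end
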